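/- For every ε > 0 there exists C_ε > 0 with the following property. For all dyadic N, N₁, N₂, N₃ ≥ 1, all m ∈ ℤ, and every fixed pair (n₁, n₃) ∈ (ℤ²)², the number of pairs (n, n₂) with (n, n₁, n₂, n₃) ∈ S^{𝐍,(m)} is at most C_ε · (min(N, N₂))^ε, uniformly in n₁, n₃, and m. -/

import Mathlib

/-- Euclidean norm of a lattice point in `ℤ²`. -/
noncomputable def znorm (n : ℤ × ℤ) : ℝ := Real.sqrt ((n.1 : ℝ) ^ 2 + (n.2 : ℝ) ^ 2)

/-- Squared Euclidean norm `|n|²` of `n ∈ ℤ²`, as an integer. -/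
def nsq (n : ℤ × ℤ) : ℤ := n.1 ^ 2 + n.2 ^ 2

/-- `φ(n̄) = |n|² − |n₁|² + |n₂|² − |n₃|²`. -/
def phiFn (n n₁ n₂ n₃ : ℤ × ℤ) : ℤ := nsq n - nsq n₁ + nsq n₂ - nsq n₃

/-- `N` is a dyadic number: `N = 2^k` for some integer `k ≥ 0`. -/
def IsDyadic (N : ℝ) : Prop := ∃ k : ℕ, N = 2 ^ k

/-- `|n| ∼ N`: for dyadic `N ≥ 2` this means `N/2 < |n| ≤ N`; for `N = 1` it means `|n| ≤ 1`. -/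
def simDyadic (N : ℝ) (n : ℤ × ℤ) : Prop :=
  (N = 1 ∧ znorm n ≤ 1) ∨ (N ≠ 1 ∧ N / 2 < znorm n ∧ znorm n ≤ N)

/-- Membership in the set `S^{𝐍,(m)}`. -/
def SMem (N N₁ N₂ N₃ : ℝ) (m : ℤ) (n n₁ n₂ n₃ : ℤ × ℤ) : Prop :=
  n = n₁ - n₂ + n₃ ∧ n ≠ n₁ ∧ n ≠ n₃ ∧ phiFn n n₁ n₂ n₃ = m ∧
    simDyadic N n ∧ simDyadic N₁ n₁ ∧ simDyadic N₂ n₂ ∧ simDyadic N₃ n₃ 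

/-!
Put `s = n₁ + n₃`. The pairs counted satisfy `n + n₂ = s`, so by the parallelogram law `n - n₂` lies
on a fixed circle `|z|² = K` of Gaussian integers; since `n - n₂ = 2n - s = s - 2n₂`, it also lies
in a disc of radius `R = 2 min(N, N₂)`. If `K > 16 R⁶`, the formula `abc = 4 · area · circumradius`
leaves room for at most two lattice points. Otherwise the whole circle carries `O(d(K)) = O(R^ε)`
Gaussian integers, by unique factorization in `ℤ[i]` and the divisor bound.
-/

section DivisorBound

lemma natCast_add_one_le_pow {q : ℝ} (hq : 2 ≤ q) (a : ℕ) : (a + 1 : ℝ) ≤ q ^ a := by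
  have bernoulli := one_add_mul_sub_le_pow (by linarith : -1 ≤ q) a
  nlinarith [a.cast_nonneg (α := ℝ)]

lemma natCast_add_one_le_div_mul_pow {q : ℝ} (hq : 1 < q) (a : ℕ) :
    (a + 1 : ℝ) ≤ q / (q - 1) * q ^ a := by
  have bernoulli := one_add_mul_sub_le_pow (by linarith : -1 ≤ q) (a + 1)
  push_cast at bernoulli
  rw [div_mul_eq_mul_div, le_div_iff₀ (sub_pos.2 hq), ← pow_succ']
  linarith

lemma rpow_eq_prod_primeFactors {n : ℕ} (hn : n ≠ 0) (δ : ℝ) :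
    (n : ℝ) ^ δ = ∏ p ∈ n.primeFactors, ((p : ℝ) ^ δ) ^ n.factorization p := by
  have hprod : (n : ℝ) = ∏ p ∈ n.primeFactors, (p : ℝ) ^ n.factorization p := by
    conv_lhs => rw [← Nat.prod_factorization_pow_eq_self hn]
    simp [Finsupp.prod]
  conv_lhs => rw [hprod, ← Real.finsetProd_rpow _ _ fun _ _ ↦ by positivity]
  exact Finset.prod_congr rfl fun p _ ↦ Real.rpow_pow_comm p.cast_nonneg δ _ |>.symm

/-- A bound for the factor by which a prime `p` with `p^δ < 2` can violate the local divisor bound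
`a + 1 ≤ p^(δa)`. -/
noncomputable def localDivisorConst (δ : ℝ) : ℝ := 2 ^ δ / (2 ^ δ - 1)

lemma one_le_localDivisorConst {δ : ℝ} (hδ : 0 < δ) : 1 ≤ localDivisorConst δ := by
  have h : (1 : ℝ) < 2 ^ δ := Real.one_lt_rpow one_lt_two hδ
  rw [localDivisorConst, one_le_div (sub_pos.2 h)]
  linarith

lemma natCast_add_one_le_localDivisorConst_mul {δ : ℝ} (hδ : 0 < δ) {p : ℕ} (hp : 2 ≤ p) (a : ℕ) :
    (a + 1 : ℝ) ≤ (if (p : ℝ) ^ δ < 2 then localDivisorConst δ else 1) * ((p : ℝ) ^ δ) ^ a := by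
  split_ifs with h
  · have hp' : (2 : ℝ) ≤ p := mod_cast hp
    have hC := one_le_localDivisorConst hδ
    calc (a + 1 : ℝ) ≤ localDivisorConst δ * ((2 : ℝ) ^ δ) ^ a :=
          natCast_add_one_le_div_mul_pow (Real.one_lt_rpow one_lt_two hδ) a
      _ ≤ localDivisorConst δ * ((p : ℝ) ^ δ) ^ a := by gcongr
  · rw [one_mul]
    exact natCast_add_one_le_pow (not_lt.1 h) a

lemma card_filter_rpow_lt_two_le {δ : ℝ} (hδ : 0 < δ) (s : Finset ℕ) :
    (s.filter fun p : ℕ ↦ (p : ℝ) ^ δ < 2).card ≤ ⌈(2 : ℝ) ^ δ⁻¹⌉₊ := by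
  conv_rhs => rw [← Finset.card_range ⌈(2 : ℝ) ^ δ⁻¹⌉₊]
  refine Finset.card_le_card fun p hp ↦ Finset.mem_range.2 (Nat.lt_ceil.2 ?_)
  exact (Real.lt_rpow_inv_iff_of_pos p.cast_nonneg zero_le_two hδ).2 (Finset.mem_filter.1 hp).2

theorem exists_card_divisors_le_rpow {δ : ℝ} (hδ : 0 < δ) :
    ∃ C : ℝ, 0 < C ∧ ∀ n : ℕ, n ≠ 0 → (n.divisors.card : ℝ) ≤ C * (n : ℝ) ^ δ := by
  have hB := one_le_localDivisorConst hδ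
  set B := localDivisorConst δ
  refine ⟨B ^ ⌈(2 : ℝ) ^ δ⁻¹⌉₊, by positivity, fun n hn ↦ ?_⟩
  calc (n.divisors.card : ℝ) = ∏ p ∈ n.primeFactors, (n.factorization p + 1 : ℝ) := by
        rw [Nat.card_divisors hn]; push_cast; rfl
    _ ≤ ∏ p ∈ n.primeFactors,
          (if (p : ℝ) ^ δ < 2 then B else 1) * ((p : ℝ) ^ δ) ^ n.factorization p :=
        Finset.prod_le_prod (fun _ _ ↦ by positivity) fun p hp ↦
          natCast_add_one_le_localDivisorConst_mul hδ (Nat.prime_of_mem_primeFactors hp).two_le _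
    _ = B ^ (n.primeFactors.filter fun p : ℕ ↦ (p : ℝ) ^ δ < 2).card * (n : ℝ) ^ δ := by
        rw [Finset.prod_mul_distrib, ← rpow_eq_prod_primeFactors hn, ← Finset.prod_filter,
          Finset.prod_const]
    _ ≤ B ^ ⌈(2 : ℝ) ^ δ⁻¹⌉₊ * (n : ℝ) ^ δ := by
        gcongr
        exact card_filter_rpow_lt_two_le hδ _

end DivisorBound

section GaussianCircle

/-- The Gaussian integers on the circle of radius `√K` centred at the origin. The squared radius is
an arbitrary integer; the circle is empty for negative `K`. -/
def gaussianCircle (K : ℤ) : Set GaussianInt := {z | z.norm = K}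

lemma mem_gaussianCircle {K : ℤ} {z : GaussianInt} : z ∈ gaussianCircle K ↔ z.norm = K :=
  Iff.rfl

lemma mapsTo_gaussianCircle_box (K : ℤ) :
    Set.MapsTo (fun z : GaussianInt ↦ (z.re, z.im)) (gaussianCircle K)
      (Finset.Icc (-K) K ×ˢ Finset.Icc (-K) K : Finset (ℤ × ℤ)) := by
  rintro z rfl
  have hnorm : z.norm = z.re ^ 2 + z.im ^ 2 := by rw [Zsqrtd.norm_def]; ring
  simp only [Finset.coe_product, Finset.coe_Icc, Set.mem_prod, Set.mem_Icc, ← abs_le,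
    Int.abs_eq_natAbs]
  have hre := Int.natAbs_le_self_sq z.re
  have him := Int.natAbs_le_self_sq z.im
  constructor <;> linarith [sq_nonneg z.re, sq_nonneg z.im]

lemma injective_re_im : Function.Injective fun z : GaussianInt ↦ (z.re, z.im) :=
  fun _ _ h ↦ Zsqrtd.ext (congrArg Prod.fst h) (congrArg Prod.snd h)

lemma gaussianCircle_finite (K : ℤ) : (gaussianCircle K).Finite :=
  .of_injOn (mapsTo_gaussianCircle_box K) injective_re_im.injOn (Finset.finite_toSet _)

lemma ncard_gaussianCircle_le_sq (K : ℤ) : (gaussianCircle K).ncard ≤ (2 * K + 1).toNat ^ 2 := by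
  calc (gaussianCircle K).ncard
      ≤ ((Finset.Icc (-K) K ×ˢ Finset.Icc (-K) K : Finset (ℤ × ℤ)) : Set (ℤ × ℤ)).ncard :=
        Set.ncard_le_ncard_of_injOn _ (mapsTo_gaussianCircle_box K) injective_re_im.injOn
          (Finset.finite_toSet _)
    _ = (2 * K + 1).toNat ^ 2 := by
        rw [Set.ncard_coe_finset, Finset.card_product, Int.card_Icc, ← sq]
        congr 2
        ring

lemma exists_eq_pow_mul_pow_mul_and_not_dvd {α : Type*} [CommMonoidWithZero α] [WfDvdMonoid α]
    {a b x : α} (ha : ¬ IsUnit a) (hb : ¬ IsUnit b) (hx : x ≠ 0) :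
    ∃ (i j : ℕ) (w : α), x = a ^ i * b ^ j * w ∧ ¬ a ∣ w ∧ ¬ b ∣ w := by
  obtain ⟨i, y, hay, rfl⟩ := WfDvdMonoid.max_power_factor' hx ha
  obtain ⟨j, w, hbw, rfl⟩ := WfDvdMonoid.max_power_factor' (right_ne_zero_of_mul hx) hb
  exact ⟨i, j, w, (mul_assoc _ _ _).symm, fun h ↦ hay (h.mul_left _), hbw⟩

lemma exists_gaussianPrime_dvd {p : ℕ} (hp : p.Prime) :
    ∃ (π : GaussianInt) (e : ℕ), Prime π ∧ π ∣ p ∧ e ≠ 0 ∧ π.norm = p ^ e := by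
  have hp_unit : ¬ IsUnit (p : GaussianInt) := by
    rw [← Zsqrtd.norm_eq_one_iff, Zsqrtd.norm_natCast, Int.natAbs_mul, Int.natAbs_natCast]
    exact fun h ↦ hp.ne_one (Nat.eq_one_of_mul_eq_one_left h)
  obtain ⟨π, hπ, c, hc⟩ :=
    WfDvdMonoid.exists_irreducible_factor hp_unit (mod_cast hp.ne_zero)
  have hdvd : π.norm.natAbs ∣ p ^ 2 := by
    refine ⟨c.norm.natAbs, ?_⟩
    rw [← Int.natAbs_mul, ← Zsqrtd.norm_mul, ← hc, Zsqrtd.norm_natCast, Int.natAbs_mul,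
      Int.natAbs_natCast, sq]
  obtain ⟨e, -, he⟩ := (Nat.dvd_prime_pow hp).1 hdvd
  refine ⟨π, e, hπ.prime, ⟨c, hc⟩, ?_, ?_⟩
  · rintro rfl
    exact hπ.not_isUnit (Zsqrtd.norm_eq_one_iff.1 he)
  · rw [← GaussianInt.abs_natCast_norm, he, Nat.cast_pow]

lemma not_dvd_norm_of_not_dvd {π w : GaussianInt} {p : ℕ} (hπ : Prime π) (hp : π ∣ p)
    (hw : ¬ π ∣ w) (hw' : ¬ star π ∣ w) : ¬ (p : ℤ) ∣ w.norm := by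
  rintro ⟨c, hc⟩
  have hdvd : π ∣ w * star w := by
    rw [← Zsqrtd.norm_eq_mul_conj, hc, Int.cast_mul, Int.cast_natCast]
    exact hp.mul_right _
  rcases hπ.dvd_or_dvd hdvd with h | ⟨v, hv⟩
  · exact hw h
  · exact hw' ⟨star v, by rw [← star_mul', ← hv, star_star]⟩

lemma pow_mul_inj_of_not_dvd {p a b m n : ℕ} (hp : p ≠ 0) (hm : ¬ p ∣ m) (hn : ¬ p ∣ n)
    (h : p ^ a * m = p ^ b * n) : a = b ∧ m = n := by
  have hne : p ^ a * m ≠ 0 := mul_ne_zero (pow_ne_zero a hp) fun h ↦ hm (h ▸ dvd_zero p)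
  exact Prod.ext_iff.1 ((Nat.maxPowDvdDiv_of_pow_mul_eq hne rfl hm).symm.trans
    (Nat.maxPowDvdDiv_of_pow_mul_eq hne h.symm hn))

lemma exists_eq_pow_mul_star_pow_mul {p a m e : ℕ} {π z : GaussianInt} (hp : p ≠ 0)
    (hm : ¬ p ∣ m) (hπ : Prime π) (hdvd : π ∣ p) (hnorm : π.norm = p ^ e)
    (hz : z ∈ gaussianCircle (p ^ a * m : ℕ)) :
    ∃ (i j : ℕ) (w : GaussianInt),
      z = π ^ i * star π ^ j * w ∧ w ∈ gaussianCircle m ∧ e * (i + j) = a := by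
  have hm0 : m ≠ 0 := fun h ↦ hm (h ▸ dvd_zero p)
  have hz0 : z ≠ 0 := GaussianInt.norm_pos.1 (hz ▸ by positivity)
  have hπ' : ¬ IsUnit (star π) := isUnit_star.not.2 hπ.not_isUnit
  obtain ⟨i, j, w, rfl, hw, hw'⟩ := exists_eq_pow_mul_pow_mul_and_not_dvd hπ.not_isUnit hπ' hz0
  have hpw : ¬ p ∣ w.norm.natAbs :=
    Int.natCast_dvd.not.1 (not_dvd_norm_of_not_dvd hπ hdvd hw hw')
  have hnorms : p ^ (e * (i + j)) * w.norm.natAbs = p ^ a * m := by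
    have norm_pow (u : GaussianInt) (k : ℕ) : (u ^ k).norm = u.norm ^ k :=
      map_pow Zsqrtd.normMonoidHom u k
    rw [mem_gaussianCircle, Zsqrtd.norm_mul, Zsqrtd.norm_mul, norm_pow, norm_pow,
      Zsqrtd.norm_conj, hnorm, ← pow_add, ← pow_mul, ← GaussianInt.abs_natCast_norm w] at hz
    exact mod_cast hz
  obtain ⟨he, hwm⟩ := pow_mul_inj_of_not_dvd hp hpw hm hnorms
  exact ⟨i, j, w, rfl, by rw [← hwm]; exact (GaussianInt.abs_natCast_norm w).symm, he⟩

lemma ncard_gaussianCircle_prime_pow_mul_le {p m : ℕ} (a : ℕ) (hp : p.Prime) (hm : ¬ p ∣ m) :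
    (gaussianCircle (p ^ a * m : ℕ)).ncard ≤ (a + 1) * (gaussianCircle m).ncard := by
  obtain ⟨π, e, hπ, hdvd, he, hnorm⟩ := exists_gaussianPrime_dvd hp
  set s : Set (ℕ × GaussianInt) := (Finset.range (a + 1) : Set ℕ) ×ˢ gaussianCircle m
  have hs : s.Finite := (Finset.finite_toSet _).prod (gaussianCircle_finite m)
  have hsub : gaussianCircle (p ^ a * m : ℕ) ⊆
      (fun q ↦ π ^ q.1 * star π ^ (a / e - q.1) * q.2) '' s := by
    intro z hz
    obtain ⟨i, j, w, rfl, hw, rfl⟩ :=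
      exists_eq_pow_mul_star_pow_mul hp.ne_zero hm hπ hdvd hnorm hz
    have hi : i ≤ e * (i + j) :=
      (Nat.le_add_right i j).trans (Nat.le_mul_of_pos_left _ (Nat.pos_of_ne_zero he))
    refine ⟨(i, w), ⟨Finset.mem_coe.2 (Finset.mem_range_succ_iff.2 hi), hw⟩, ?_⟩
    simp only [Nat.mul_div_cancel_left _ (Nat.pos_of_ne_zero he), Nat.add_sub_cancel_left]
  calc (gaussianCircle (p ^ a * m : ℕ)).ncard ≤ s.ncard :=
        (Set.ncard_le_ncard hsub (hs.image _)).trans (Set.ncard_image_le hs)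
    _ = (a + 1) * (gaussianCircle m).ncard := by
        rw [Set.ncard_prod, Set.ncard_coe_finset, Finset.card_range]

lemma ncard_gaussianCircle_le_card_divisors {n : ℕ} (hn : n ≠ 0) :
    (gaussianCircle n).ncard ≤ 9 * n.divisors.card := by
  induction n using Nat.recOnPrimePow with
  | zero => exact absurd rfl hn
  | one => exact ncard_gaussianCircle_le_sq 1
  | prime_pow_mul m p a hp hm _ ih =>
    have hcop : (p ^ a).Coprime m := (hp.coprime_iff_not_dvd.2 hm).pow_left a
    calc (gaussianCircle (p ^ a * m : ℕ)).ncard ≤ (a + 1) * (gaussianCircle m).ncard :=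
          ncard_gaussianCircle_prime_pow_mul_le a hp hm
      _ ≤ (a + 1) * (9 * m.divisors.card) := by gcongr; exact ih (right_ne_zero_of_mul hn)
      _ = 9 * (p ^ a * m).divisors.card := by
          rw [hcop.card_divisors_mul, Nat.divisors_prime_pow hp, Finset.card_map, Finset.card_range]
          ring

theorem exists_ncard_gaussianCircle_le_rpow {δ : ℝ} (hδ : 0 < δ) :
    ∃ C : ℝ, 0 < C ∧ ∀ (K : ℤ) (X : ℝ), 1 ≤ X → K ≤ X →
      ((gaussianCircle K).ncard : ℝ) ≤ C * X ^ δ := by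
  obtain ⟨C, hC, hdiv⟩ := exists_card_divisors_le_rpow hδ
  refine ⟨9 * C + 1, by positivity, fun K X hX hKX ↦ ?_⟩
  have hXδ : 1 ≤ X ^ δ := Real.one_le_rpow hX hδ.le
  rcases le_or_gt K 0 with hK | hK
  · have hcard : (gaussianCircle K).ncard ≤ 1 :=
      (ncard_gaussianCircle_le_sq K).trans (pow_le_one₀ (Nat.zero_le _) (by omega))
    have hcard' : ((gaussianCircle K).ncard : ℝ) ≤ 1 := mod_cast hcard
    nlinarith
  · lift K to ℕ using hK.le
    have hK0 : K ≠ 0 := by omega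
    calc ((gaussianCircle K).ncard : ℝ) ≤ 9 * K.divisors.card :=
          mod_cast ncard_gaussianCircle_le_card_divisors hK0
      _ ≤ 9 * (C * (K : ℝ) ^ δ) := by gcongr; exact hdiv K hK0
      _ ≤ 9 * (C * X ^ δ) := by gcongr; exact mod_cast hKX
      _ ≤ (9 * C + 1) * X ^ δ := by linarith

end GaussianCircle

section GaussianArc

/-- The Gaussian integers on the circle of radius `√K` centred at the origin that lie in the closed
disc of centre `c` and radius `R`. -/
def gaussianArc (K : ℤ) (c : ℂ) (R : ℝ) : Set GaussianInt :=
  {z ∈ gaussianCircle K | (z : ℂ) ∈ Metric.closedBall c R}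

lemma gaussianArc_subset_gaussianCircle (K : ℤ) (c : ℂ) (R : ℝ) :
    gaussianArc K c R ⊆ gaussianCircle K :=
  Set.sep_subset _ _

lemma gaussianArc_finite (K : ℤ) (c : ℂ) (R : ℝ) : (gaussianArc K c R).Finite :=
  (gaussianCircle_finite K).subset (gaussianArc_subset_gaussianCircle K c R)

-- `abc = 4 · area · circumradius`, squared.
lemma norm_sub_mul_norm_sub_mul_norm_sub {K : ℤ} {x y z : GaussianInt} (hx : x ∈ gaussianCircle K)
    (hy : y ∈ gaussianCircle K) (hz : z ∈ gaussianCircle K) :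
    (x - y).norm * (y - z).norm * (z - x).norm = 4 * K * ((y - x) * star (z - x)).im ^ 2 := by
  obtain ⟨u, rfl⟩ : ∃ u, y = x + u := ⟨y - x, by ring⟩
  obtain ⟨v, rfl⟩ : ∃ v, z = x + v := ⟨z - x, by ring⟩
  simp only [mem_gaussianCircle, Zsqrtd.norm_def, Zsqrtd.re_add, Zsqrtd.im_add, Zsqrtd.re_sub,
    Zsqrtd.im_sub, add_sub_cancel_left, Zsqrtd.im_mul, Zsqrtd.re_star, Zsqrtd.im_star] at hx hy hz ⊢
  have hxu : 2 * (x.re * u.re + x.im * u.im) = -(u.re ^ 2 + u.im ^ 2) := by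
    linear_combination hy - hx
  have hxv : 2 * (x.re * v.re + x.im * v.im) = -(v.re ^ 2 + v.im ^ 2) := by
    linear_combination hz - hx
  have lagrange : 4 * K * (u.re * v.im - u.im * v.re) ^ 2 =
      (2 * (x.re * u.re + x.im * u.im) * v.re - 2 * (x.re * v.re + x.im * v.im) * u.re) ^ 2 +
      (2 * (x.re * u.re + x.im * u.im) * v.im - 2 * (x.re * v.re + x.im * v.im) * u.im) ^ 2 := by
    rw [← hx]
    ring
  rw [hxu, hxv] at lagrange
  linear_combination -lagrange

lemma norm_sub_mem_Ioc {K : ℤ} {c : ℂ} {R : ℝ} {z w : GaussianInt} (hz : z ∈ gaussianArc K c R)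
    (hw : w ∈ gaussianArc K c R) (hzw : z ≠ w) : ((z - w).norm : ℝ) ∈ Set.Ioc 0 ((2 * R) ^ 2) := by
  refine ⟨mod_cast GaussianInt.norm_pos.2 (sub_ne_zero.2 hzw), ?_⟩
  rw [GaussianInt.intCast_real_norm, Complex.normSq_eq_norm_sq, GaussianInt.toComplex_sub,
    ← dist_eq_norm, two_mul]
  gcongr
  exact (dist_triangle_right _ _ c).trans (add_le_add hz.2 hw.2)

lemma ncard_gaussianArc_le_two {K : ℤ} {R : ℝ} (c : ℂ) (hK : 16 * R ^ 6 < K) :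
    (gaussianArc K c R).ncard ≤ 2 := by
  by_contra! hcard
  obtain ⟨x, y, z, hx, hy, hz, hxy, hxz, hyz⟩ :=
    (Set.two_lt_ncard_iff (gaussianArc_finite K c R)).1 hcard
  obtain ⟨hxy_pos, hxy_le⟩ := norm_sub_mem_Ioc hx hy hxy
  obtain ⟨hyz_pos, hyz_le⟩ := norm_sub_mem_Ioc hy hz hyz
  obtain ⟨hzx_pos, hzx_le⟩ := norm_sub_mem_Ioc hz hx hxz.symm
  set D : ℤ := ((y - x) * star (z - x)).im
  have hsides : ((x - y).norm * (y - z).norm * (z - x).norm : ℝ) = 4 * K * (D : ℝ) ^ 2 :=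
    mod_cast norm_sub_mul_norm_sub_mul_norm_sub hx.1 hy.1 hz.1
  have hD : 1 ≤ (D : ℝ) ^ 2 := by
    have hD0 : D ≠ 0 := by
      intro hD0
      have hpos := hsides ▸ mul_pos (mul_pos hxy_pos hyz_pos) hzx_pos
      simp [hD0] at hpos
    exact mod_cast (one_le_sq_iff_one_le_abs D).2 (Int.one_le_abs hD0)
  have hK0 : 0 < (K : ℝ) := lt_of_le_of_lt (by positivity) hK
  have : 4 * (K : ℝ) ≤ 64 * R ^ 6 := calc
    4 * (K : ℝ) ≤ 4 * K * (D : ℝ) ^ 2 := le_mul_of_one_le_right (by positivity) hD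
    _ = (x - y).norm * (y - z).norm * (z - x).norm := hsides.symm
    _ ≤ (2 * R) ^ 2 * (2 * R) ^ 2 * (2 * R) ^ 2 := by gcongr
    _ = 64 * R ^ 6 := by ring
  linarith

theorem exists_ncard_gaussianArc_le_rpow {ε : ℝ} (hε : 0 < ε) :
    ∃ C : ℝ, 0 < C ∧ ∀ (K : ℤ) (c : ℂ) (R : ℝ), 1 ≤ R →
      ((gaussianArc K c R).ncard : ℝ) ≤ C * R ^ ε := by
  obtain ⟨C, hC, hcircle⟩ := exists_ncard_gaussianCircle_le_rpow (by positivity : 0 < ε / 6)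
  refine ⟨C * 16 ^ (ε / 6) + 2, by positivity, fun K c R hR ↦ ?_⟩
  have hRε : 1 ≤ R ^ ε := Real.one_le_rpow hR hε.le
  have hC16 : 0 < C * (16 : ℝ) ^ (ε / 6) := by positivity
  rcases lt_or_ge (16 * R ^ 6) (K : ℝ) with hK | hK
  · have htwo : ((gaussianArc K c R).ncard : ℝ) ≤ 2 := mod_cast ncard_gaussianArc_le_two c hK
    nlinarith
  · have hX : 1 ≤ 16 * R ^ 6 := by linarith [one_le_pow₀ hR (n := 6)]
    have hsub := Set.ncard_le_ncard (gaussianArc_subset_gaussianCircle K c R)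
      (gaussianCircle_finite K)
    calc ((gaussianArc K c R).ncard : ℝ) ≤ (gaussianCircle K).ncard := mod_cast hsub
      _ ≤ C * (16 * R ^ 6) ^ (ε / 6) := hcircle K _ hX hK
      _ = C * 16 ^ (ε / 6) * R ^ ε := by
          rw [Real.mul_rpow (by norm_num) (by positivity), ← Real.rpow_natCast_mul (by positivity),
            mul_assoc]
          congr 3
          push_cast
          ring
      _ ≤ (C * 16 ^ (ε / 6) + 2) * R ^ ε := by linarith

end GaussianArc

section ResonantPairs

/-- The lattice point `(a, b)` as the Gaussian integer `a + bi`. -/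
def toGaussian : ℤ × ℤ →+ GaussianInt where
  toFun n := ⟨n.1, n.2⟩
  map_zero' := rfl
  map_add' _ _ := rfl

lemma toGaussian_re (n : ℤ × ℤ) : (toGaussian n).re = n.1 := rfl

lemma toGaussian_im (n : ℤ × ℤ) : (toGaussian n).im = n.2 := rfl

lemma toGaussian_injective : Function.Injective toGaussian :=
  fun _ _ h ↦ Prod.ext (congrArg Zsqrtd.re h) (congrArg Zsqrtd.im h)

lemma norm_toGaussian (n : ℤ × ℤ) : (toGaussian n).norm = nsq n := by
  rw [Zsqrtd.norm_def, nsq, toGaussian_re, toGaussian_im]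
  ring

lemma norm_toComplex_toGaussian (n : ℤ × ℤ) : ‖(toGaussian n : ℂ)‖ = znorm n := by
  rw [← Real.sqrt_sq (norm_nonneg _), ← Complex.normSq_eq_norm_sq, ← GaussianInt.intCast_real_norm,
    norm_toGaussian, nsq, znorm]
  push_cast
  rfl

lemma nsq_sub_eq (a b : ℤ × ℤ) : nsq (a - b) = 2 * (nsq a + nsq b) - nsq (a + b) := by
  simp only [nsq, Prod.fst_sub, Prod.snd_sub, Prod.fst_add, Prod.snd_add]
  ring

lemma IsDyadic.one_le {N : ℝ} (hN : IsDyadic N) : 1 ≤ N := by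
  obtain ⟨k, rfl⟩ := hN
  exact one_le_pow₀ one_le_two

lemma simDyadic.znorm_le {N : ℝ} {n : ℤ × ℤ} (h : simDyadic N n) : znorm n ≤ N := by
  rcases h with ⟨rfl, h⟩ | ⟨-, -, h⟩ <;> exact h

/-- The pairs `(n, n₂)` counted by the theorem for a fixed `(n₁, n₃)`, with the dyadic shells
enlarged to the balls `|n| ≤ N`, `|n₂| ≤ N₂` and the conditions `n ≠ n₁, n₃` dropped. -/
def resonantPairs (N N₂ : ℝ) (m : ℤ) (n₁ n₃ : ℤ × ℤ) : Set ((ℤ × ℤ) × (ℤ × ℤ)) :=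
  {p | p.1 = n₁ - p.2 + n₃ ∧ phiFn p.1 n₁ p.2 n₃ = m ∧ znorm p.1 ≤ N ∧ znorm p.2 ≤ N₂}

variable {N N₂ : ℝ} {m : ℤ} {n₁ n₃ : ℤ × ℤ} {p : (ℤ × ℤ) × (ℤ × ℤ)}

lemma add_eq_of_mem_resonantPairs (hp : p ∈ resonantPairs N N₂ m n₁ n₃) :
    p.1 + p.2 = n₁ + n₃ := by
  rw [hp.1]
  abel

lemma toGaussian_sub_mem_gaussianCircle (hp : p ∈ resonantPairs N N₂ m n₁ n₃) :
    toGaussian (p.1 - p.2) ∈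
      gaussianCircle (2 * (m + nsq n₁ + nsq n₃) - nsq (n₁ + n₃)) := by
  rw [mem_gaussianCircle, norm_toGaussian, nsq_sub_eq,
    add_eq_of_mem_resonantPairs hp, ← hp.2.1, phiFn]
  ring

lemma toGaussian_sub_mem_closedBall_fst (hp : p ∈ resonantPairs N N₂ m n₁ n₃) :
    (toGaussian (p.1 - p.2) : ℂ) ∈ Metric.closedBall (-toGaussian (n₁ + n₃) : ℂ) (2 * N) := by
  have hsub : (toGaussian (p.1 - p.2) : ℂ) - -toGaussian (n₁ + n₃) = 2 * toGaussian p.1 := by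
    rw [← add_eq_of_mem_resonantPairs hp]
    simp only [map_sub, map_add]
    ring
  rw [mem_closedBall_iff_norm, hsub, norm_mul, norm_toComplex_toGaussian, Complex.norm_ofNat]
  exact mul_le_mul_of_nonneg_left hp.2.2.1 zero_le_two

lemma toGaussian_sub_mem_closedBall_snd (hp : p ∈ resonantPairs N N₂ m n₁ n₃) :
    (toGaussian (p.1 - p.2) : ℂ) ∈ Metric.closedBall (toGaussian (n₁ + n₃) : ℂ) (2 * N₂) := by
  have hsub : (toGaussian (p.1 - p.2) : ℂ) - toGaussian (n₁ + n₃) = -(2 * toGaussian p.2) := by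
    rw [← add_eq_of_mem_resonantPairs hp]
    simp only [map_sub, map_add]
    ring
  rw [mem_closedBall_iff_norm, hsub, norm_neg, norm_mul, norm_toComplex_toGaussian,
    Complex.norm_ofNat]
  exact mul_le_mul_of_nonneg_left hp.2.2.2 zero_le_two

lemma injOn_toGaussian_sub (N N₂ : ℝ) (m : ℤ) (n₁ n₃ : ℤ × ℤ) :
    Set.InjOn (fun p : (ℤ × ℤ) × (ℤ × ℤ) ↦ toGaussian (p.1 - p.2))
      (resonantPairs N N₂ m n₁ n₃) := by
  rintro ⟨a, b⟩ hp ⟨a', b'⟩ hq h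
  have hsub : a - b = a' - b' := toGaussian_injective h
  have hadd : a + b = a' + b' :=
    (add_eq_of_mem_resonantPairs hp).trans (add_eq_of_mem_resonantPairs hq).symm
  simp only [Prod.ext_iff, Prod.fst_sub, Prod.snd_sub, Prod.fst_add, Prod.snd_add] at hsub hadd ⊢
  omega

lemma exists_mapsTo_gaussianArc (N N₂ : ℝ) (m : ℤ) (n₁ n₃ : ℤ × ℤ) :
    ∃ (K : ℤ) (c : ℂ), Set.MapsTo (fun p : (ℤ × ℤ) × (ℤ × ℤ) ↦ toGaussian (p.1 - p.2))
      (resonantPairs N N₂ m n₁ n₃) (gaussianArc K c (2 * min N N₂)) := by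
  rcases min_choice N N₂ with h | h <;> rw [h]
  · exact ⟨_, _, fun _ hp ↦
      ⟨toGaussian_sub_mem_gaussianCircle hp, toGaussian_sub_mem_closedBall_fst hp⟩⟩
  · exact ⟨_, _, fun _ hp ↦
      ⟨toGaussian_sub_mem_gaussianCircle hp, toGaussian_sub_mem_closedBall_snd hp⟩⟩

lemma SMem.mem_resonantPairs {N₁ N₃ : ℝ} {n n₂ : ℤ × ℤ}
    (h : SMem N N₁ N₂ N₃ m n n₁ n₂ n₃) : (n, n₂) ∈ resonantPairs N N₂ m n₁ n₃ :=
  ⟨h.1, h.2.2.2.1, h.2.2.2.2.1.znorm_le, h.2.2.2.2.2.2.1.znorm_le⟩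

end ResonantPairs

theorem stmt10_general (ε : ℝ) (hε : 0 < ε) :
    ∃ C : ℝ, 0 < C ∧ ∀ N N₂ : ℝ, 1 ≤ N → 1 ≤ N₂ → ∀ (m : ℤ) (n₁ n₃ : ℤ × ℤ),
      (resonantPairs N N₂ m n₁ n₃).Finite ∧
        ((resonantPairs N N₂ m n₁ n₃).ncard : ℝ) ≤ C * (min N N₂) ^ ε := by
  obtain ⟨C, hC, harc⟩ := exists_ncard_gaussianArc_le_rpow hε
  refine ⟨C * 2 ^ ε, by positivity, fun N N₂ hN hN₂ m n₁ n₃ ↦ ?_⟩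
  have hmin : 1 ≤ min N N₂ := le_min hN hN₂
  obtain ⟨K, c, hmaps⟩ := exists_mapsTo_gaussianArc N N₂ m n₁ n₃
  have hinj := injOn_toGaussian_sub N N₂ m n₁ n₃
  have hfin := gaussianArc_finite K c (2 * min N N₂)
  refine ⟨.of_injOn hmaps hinj hfin, ?_⟩
  calc ((resonantPairs N N₂ m n₁ n₃).ncard : ℝ) ≤ (gaussianArc K c (2 * min N N₂)).ncard :=
        mod_cast Set.ncard_le_ncard_of_injOn _ hmaps hinj hfin
    _ ≤ C * (2 * min N N₂) ^ ε := harc K c _ (by linarith)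
    _ = C * 2 ^ ε * (min N N₂) ^ ε := by
        rw [Real.mul_rpow zero_le_two (zero_le_one.trans hmin), mul_assoc]

theorem stmt10 (ε : ℝ) (hε : 0 < ε) :
    ∃ C : ℝ, 0 < C ∧ ∀ N N₁ N₂ N₃ : ℝ,
      IsDyadic N → IsDyadic N₁ → IsDyadic N₂ → IsDyadic N₃ → ∀ m : ℤ, ∀ n₁ n₃ : ℤ × ℤ,
      (({p : (ℤ × ℤ) × (ℤ × ℤ) |
          SMem N N₁ N₂ N₃ m p.1 n₁ p.2 n₃}).ncard : ℝ) ≤ C * (min N N₂) ^ ε := by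
  obtain ⟨C, hC, h⟩ := stmt10_general ε hε
  refine ⟨C, hC, fun N N₁ N₂ N₃ hN _ hN₂ _ m n₁ n₃ ↦ ?_⟩
  obtain ⟨hfin, hcard⟩ := h N N₂ hN.one_le hN₂.one_le m n₁ n₃
  exact le_trans (mod_cast Set.ncard_le_ncard (fun _ ↦ SMem.mem_resonantPairs) hfin) hcard
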